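/- For every bounded continuous potential f ∈ C_b(X,ℝ) there exists μ_f ∈ M^a_σ(X) such that h^v(μ_f) + μ_f(f) = sup_{μ ∈ M^a_σ(X)} [ h^v(μ) + μ(f) ]; moreover μ_f can be chosen to be an extreme point of M^a_σ(X). -/

import Mathlib

open MeasureTheory Filter Topology BoundedContinuousFunction

noncomputable section

variable {E : Type*} [MetricSpace E]

/-- The metric on the sequence space `X = E^ℕ`:
`d_X(x,y) = ∑_{n=1}^∞ 2⁻ⁿ · min(d_E(x_n,y_n), 1)`. -/
def dX (x y : ℕ → E) : ℝ :=
  ∑' n : ℕ, ((1 : ℝ) / 2) ^ (n + 1) * min (dist (x n) (y n)) 1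

/-- The left shift `σ(x₁,x₂,x₃,…) = (x₂,x₃,…)`. -/
def shift (x : ℕ → E) : ℕ → E := fun n => x (n + 1)

theorem continuous_shift : Continuous (shift (E := E)) :=
  continuous_pi fun n => continuous_apply (n + 1)

/-- Prepending one symbol: `ax = (a, x₁, x₂, …)`. -/
def cons (a : E) (x : ℕ → E) : ℕ → E := fun n => Nat.casesOn n a x

/-- Prepending a finite word `a = (a₁,…,a_n)`. -/
def prepend {n : ℕ} (a : Fin n → E) (x : ℕ → E) : ℕ → E :=
  fun k => if h : k < n then a ⟨k, h⟩ else x (k - n)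

/-- Birkhoff sums `f_n = ∑_{k=0}^{n-1} f ∘ σᵏ`. -/
def birkhoff (f : (ℕ → E) → ℝ) (n : ℕ) (x : ℕ → E) : ℝ :=
  ∑ k ∈ Finset.range n, f (shift^[k] x)

/-- Boundedness of a real-valued function on `X`. -/
def Bdd (g : (ℕ → E) → ℝ) : Prop := ∃ M : ℝ, ∀ x, |g x| ≤ M

/-- `g` is `α`-Hölder with constant `C` (w.r.t. the metric `dX`). -/
def HolderConst (α C : ℝ) (g : (ℕ → E) → ℝ) : Prop :=
  ∀ x y, |g x - g y| ≤ C * dX x y ^ α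

/-- `g ∈ Hol(α)`: bounded, continuous and `α`-Hölder. -/
def MemHol (α : ℝ) (g : (ℕ → E) → ℝ) : Prop :=
  Continuous g ∧ Bdd g ∧ ∃ C : ℝ, HolderConst α C g

/-- `g ∈ C_b(X,ℝ)`: bounded and continuous. -/
def MemCb (g : (ℕ → E) → ℝ) : Prop := Continuous g ∧ Bdd g

/-- The Hölder seminorm `D_α(g) = sup_{x ≠ y} |g x - g y| / d_X(x,y)^α`. -/
def Dalpha (α : ℝ) (g : (ℕ → E) → ℝ) : ℝ :=
  sSup {r : ℝ | ∃ x y : ℕ → E, x ≠ y ∧ r = |g x - g y| / dX x y ^ α}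

/-- The supremum norm `‖g‖_∞`. -/
def supNorm (g : (ℕ → E) → ℝ) : ℝ := ⨆ x : ℕ → E, |g x|

/-- The Hölder norm `‖g‖_α = ‖g‖_∞ + D_α(g)`. -/
def alphaNorm (α : ℝ) (g : (ℕ → E) → ℝ) : ℝ := supNorm g + Dalpha α g

variable [MeasurableSpace E] [BorelSpace E]

/-- The Ruelle transfer operator `L_f φ(x) = ∫_E e^{f(ax)} φ(ax) dp(a)`. -/
def ruelle (p : Measure E) (f φ : (ℕ → E) → ℝ) : (ℕ → E) → ℝ :=
  fun x => ∫ a, Real.exp (f (cons a x)) * φ (cons a x) ∂p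

/-- The normalized operators `P^m_n(φ) = L_f^m(φ · L_f^n 1) / L_f^{m+n} 1`. -/
def Pmn (p : Measure E) (f : (ℕ → E) → ℝ) (m n : ℕ) (φ : (ℕ → E) → ℝ) : (ℕ → E) → ℝ :=
  fun x => (ruelle p f)^[m] (fun y => φ y * (ruelle p f)^[n] (fun _ => 1) y) x /
    (ruelle p f)^[m + n] (fun _ => 1) x

/-- The equivalent bounded metric `d̄(x,y) = min{1, 4 C_f d_X(x,y)^α}`. -/
def dbar (Cf α : ℝ) (x y : ℕ → E) : ℝ := min 1 (4 * Cf * dX x y ^ α)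

/-- The Wasserstein distance associated to `d̄`, via Kantorovich duality. -/
def wass (Cf α : ℝ) (μ₁ μ₂ : Measure (ℕ → E)) : ℝ :=
  sSup {r : ℝ | ∃ g : (ℕ → E) → ℝ,
    (∀ x y, |g x - g y| ≤ dbar Cf α x y) ∧ r = (∫ x, g x ∂μ₁) - ∫ x, g x ∂μ₂}

/-- The shift as a continuous self-map of `X`. -/
def shiftCM : C(ℕ → E, ℕ → E) := ⟨shift, continuous_shift⟩

variable (E) in
/-- `M^a_1(X)`: the finitely additive probability functionals, i.e. the weak-* dual
elements `μ` of `C_b(X,ℝ)` with `μ(1) = 1` and `μ(g) ≥ 0` whenever `g ≥ 0`. -/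
def Ma1 : Set (WeakDual ℝ ((ℕ → E) →ᵇ ℝ)) :=
  {μ | μ 1 = 1 ∧ ∀ g : (ℕ → E) →ᵇ ℝ, 0 ≤ g → 0 ≤ μ g}

variable (E) in
/-- `M^a_σ(X)`: the shift-invariant elements of `M^a_1(X)`. -/
def Maσ : Set (WeakDual ℝ ((ℕ → E) →ᵇ ℝ)) :=
  {μ | μ ∈ Ma1 E ∧ ∀ g : (ℕ → E) →ᵇ ℝ, μ (g.compContinuous shiftCM) = μ g}

/-- `log λ_g = lim_{n→∞} (1/n) log (L_g^n 1)(x₀)`, which exists and is independent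
of the choice of `x₀ ∈ X` for bounded Hölder `g`. -/
def logLambda [Nonempty E] (p : Measure E) (g : (ℕ → E) → ℝ) : ℝ :=
  limUnder atTop fun n : ℕ =>
    (1 / (n : ℝ)) * Real.log ((ruelle p g)^[n] (fun _ => 1) (Classical.arbitrary (ℕ → E)))

/-- The variational entropy `h^v(μ) = inf { -μ(g) + log λ_g : g ∈ Hol(α) bounded }`,
with values in `ℝ ∪ {-∞}` (encoded in `EReal`). -/
def entropyV [Nonempty E] (p : Measure E) (α : ℝ) (μ : WeakDual ℝ ((ℕ → E) →ᵇ ℝ)) : EReal :=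
  sInf {r : EReal | ∃ g : (ℕ → E) →ᵇ ℝ, (∃ C : ℝ, HolderConst α C ⇑g) ∧
    r = ((-(μ g) + logLambda p ⇑g : ℝ) : EReal)}

/-!
Call a Hölder potential `g` normalized if `L_g 1 ≤ 1`. If `log λ_g < c`, then
`h = min_{k ≤ m} e^{-kc} L_g^k 1` satisfies `L_g h ≤ e^c h` for a suitable `m`, so that
`g + log h - log h ∘ σ - c` is normalized; its mean under every `μ ∈ M^a_σ(X)` is `μ(g) - c`. Hence
`h^v(μ)` is the infimum of `-μ(g)` over normalized Hölder potentials.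

Given normalized `g₁` and `g₂` with Birkhoff sums `S_n g₁` and `S_n g₂`, put
`W_n = e^{S_n g₁} + e^{S_n g₂}`. The potentials `log (W_{n+1} / W_n ∘ σ)` are again normalized, and
under invariant means they telescope to `log W_n ≥ max (S_n g₁) (S_n g₂)`. One potential thus serves
two means at once, up to an arbitrarily small error: the entropy, being always concave, is also
convex. So `μ ↦ h^v(μ) + μ(f)` is convex and weak-* upper semicontinuous on the compact convex set
`M^a_σ(X)`, and by Bauer's maximum principle it attains its maximum at an extreme point.
-/

section MaximumPrinciple

variable {V : Type*} [AddCommGroup V] [Module ℝ V]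

/-- Convexity on `K` of a function with values in `[-∞, ∞]`, for which `ConvexOn` is not available
because `EReal` is not a real module. Only strictly positive weights are tested, so that no product
`0 * ∞` occurs. -/
def ERealConvexOn (K : Set V) (F : V → EReal) : Prop :=
  ∀ ⦃x⦄, x ∈ K → ∀ ⦃y⦄, y ∈ K → ∀ ⦃a b : ℝ⦄, 0 < a → 0 < b → a + b = 1 →
    F (a • x + b • y) ≤ a * F x + b * F y

theorem ERealConvexOn.add_linearMap {K : Set V} {F : V → EReal} (hF : ERealConvexOn K F)
    (L : V →ₗ[ℝ] ℝ) : ERealConvexOn K fun x => F x + (L x : EReal) := by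
  intro x hx y hy a b ha hb hab
  have distrib (c : ℝ) (hc : 0 < c) (r : EReal) (t : ℝ) :
      (c : EReal) * (r + t) = c * r + (c * t : ℝ) := by
    rw [EReal.left_distrib_of_nonneg_of_ne_top (by exact_mod_cast hc.le) (EReal.coe_ne_top c),
      EReal.coe_mul]
  calc F (a • x + b • y) + (L (a • x + b • y) : EReal)
      ≤ (a * F x + b * F y) + (a * L x + b * L y : ℝ) := by
        rw [map_add, map_smul, map_smul, smul_eq_mul, smul_eq_mul]
        exact add_le_add_left (hF hx hy ha hb hab) _
    _ = a * (F x + L x) + b * (F y + L y) := by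
        rw [distrib a ha, distrib b hb, EReal.coe_add, add_add_add_comm]

theorem ERealConvexOn.isExtreme_setOf_isMaxOn {K : Set V} {F : V → EReal}
    (hF : ERealConvexOn K F) (hF_top : ∀ x ∈ K, F x ≠ ⊤) :
    IsExtreme ℝ K {x ∈ K | IsMaxOn F K x} := by
  refine ⟨Set.sep_subset _ _, ?_⟩
  rintro x hx y hy z ⟨-, hz_max⟩ ⟨a, b, ha, hb, hab, rfl⟩
  refine ⟨hx, isMaxOn_iff.2 fun w hw => (hz_max hw).trans ?_⟩
  have hyM : F y ≤ F (a • x + b • y) := hz_max hy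
  have hM : F (a • x + b • y) ≤ a * F x + b * F y := hF hx hy ha hb hab
  generalize F (a • x + b • y) = M at hyM hM
  have hx_top := hF_top x hx
  have hy_top := hF_top y hy
  generalize F x = r at hM hx_top ⊢
  generalize F y = s at hM hy_top hyM
  induction r with
  | top => exact absurd rfl hx_top
  | bot => simpa [EReal.coe_mul_bot_of_pos ha] using hM
  | coe r =>
    induction s with
    | top => exact absurd rfl hy_top
    | bot => exact hM.trans (by simp [EReal.coe_mul_bot_of_pos hb])
    | coe s =>
      induction M with
      | bot => exact bot_le
      | top => exact absurd (top_le_iff.1 hM) (by exact_mod_cast EReal.coe_ne_top (a * r + b * s))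
      | coe m =>
        norm_cast at hM hyM ⊢
        have hbs : b * s ≤ b * m := mul_le_mul_of_nonneg_left hyM hb.le
        have hm : a * m + b * m = m := by rw [← add_mul, hab, one_mul]
        exact le_of_mul_le_mul_left (by linarith) ha

/-- Bauer's maximum principle: the maximizers of `F` form a compact face of `K`, to which the
Krein-Milman theorem applies. -/
theorem ERealConvexOn.exists_mem_extremePoints_isMaxOn [TopologicalSpace V] [T2Space V]
    [IsTopologicalAddGroup V] [ContinuousSMul ℝ V] [LocallyConvexSpace ℝ V] {K : Set V}
    {F : V → EReal} (hF : ERealConvexOn K F) (hF_top : ∀ x ∈ K, F x ≠ ⊤)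
    (hF_usc : UpperSemicontinuousOn F K) (hK : IsCompact K) (hK_ne : K.Nonempty) :
    ∃ x ∈ K.extremePoints ℝ, IsMaxOn F K x := by
  obtain ⟨x₀, hx₀, hx₀_max⟩ := hF_usc.exists_isMaxOn hK_ne hK
  have face_eq : {x ∈ K | IsMaxOn F K x} = K ∩ F ⁻¹' Set.Ici (F x₀) := by
    ext x
    exact and_congr_right fun _ =>
      ⟨fun hx => hx hx₀, fun hx => isMaxOn_iff.2 fun y hy => (hx₀_max hy).trans hx⟩
  have face_compact : IsCompact {x ∈ K | IsMaxOn F K x} :=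
    face_eq ▸ hF_usc.isCompact_inter_preimage_Ici hK _
  obtain ⟨x, hx⟩ := face_compact.extremePoints_nonempty ⟨x₀, hx₀, hx₀_max⟩
  exact ⟨x, (hF.isExtreme_setOf_isMaxOn hF_top).extremePoints_subset_extremePoints hx, hx.1.2⟩

end MaximumPrinciple

theorem coe_mul_iInf {ι : Type*} {a : ℝ} (ha : 0 < a) (u : ι → EReal) :
    (a : EReal) * ⨅ i, u i = ⨅ i, a * u i := by
  have ha' : (0 : EReal) < a := by exact_mod_cast ha
  refine le_antisymm (le_iInf fun i => mul_le_mul_of_nonneg_left (iInf_le u i) ha'.le) ?_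
  rw [← EReal.div_le_iff_le_mul ha' (EReal.coe_ne_top a)]
  refine le_iInf fun i => ?_
  rw [EReal.div_le_iff_le_mul ha' (EReal.coe_ne_top a)]
  exact iInf_le _ i

theorem le_iInf_add_iInf_coe {ι κ : Type*} [Nonempty ι] [Nonempty κ] {u : ι → ℝ} {v : κ → ℝ}
    {c : EReal} (h : ∀ i j, c ≤ ((u i + v j : ℝ) : EReal)) :
    c ≤ (⨅ i, (u i : EReal)) + ⨅ j, (v j : EReal) := by
  have hu : ⨅ i, (u i : EReal) ≠ ⊤ :=
    ne_top_of_le_ne_top (EReal.coe_ne_top _) (iInf_le _ (Classical.arbitrary ι))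
  have hv : ⨅ j, (v j : EReal) ≠ ⊤ :=
    ne_top_of_le_ne_top (EReal.coe_ne_top _) (iInf_le _ (Classical.arbitrary κ))
  refine EReal.le_add_of_forall_gt (.inr hv) (.inl hu) fun s hs t ht => ?_
  obtain ⟨i, hi⟩ := iInf_lt_iff.1 hs
  obtain ⟨j, hj⟩ := iInf_lt_iff.1 ht
  exact (h i j).trans ((EReal.coe_add _ _).trans_le (add_le_add hi.le hj.le))

section LogExp

variable {X : Type*} [TopologicalSpace X]

/-- The exponential `e^φ` of a bounded continuous function. -/
def expBCF (φ : X →ᵇ ℝ) : X →ᵇ ℝ :=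
  .ofNormedAddCommGroup (fun x => Real.exp (φ x)) (by fun_prop) (Real.exp ‖φ‖) fun x => by
    rw [Real.norm_eq_abs, Real.abs_exp]
    exact Real.exp_le_exp.2 (φ.apply_le_norm x)

@[simp]
theorem expBCF_apply (φ : X →ᵇ ℝ) (x : X) : expBCF φ x = Real.exp (φ x) := rfl

theorem expBCF_zero : expBCF (0 : X →ᵇ ℝ) = 1 := by ext; simp

theorem expBCF_add (φ ψ : X →ᵇ ℝ) : expBCF (φ + ψ) = expBCF φ * expBCF ψ := by
  ext x; simp [Real.exp_add]

theorem expBCF_le_expBCF {φ ψ : X →ᵇ ℝ} : expBCF φ ≤ expBCF ψ ↔ φ ≤ ψ :=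
  forall_congr' fun _ => Real.exp_le_exp

theorem expBCF_injective : Function.Injective (expBCF (X := X)) := fun _ _ h =>
  le_antisymm (expBCF_le_expBCF.1 h.le) (expBCF_le_expBCF.1 h.ge)

theorem expBCF_nonneg (φ : X →ᵇ ℝ) : 0 ≤ expBCF φ := fun _ => (Real.exp_pos _).le

/-- The logarithm of a bounded continuous function bounded below by some `e^φ`, that is, by a
positive constant. -/
def logBCF (u : X →ᵇ ℝ) (hu : ∃ φ, expBCF φ ≤ u) : X →ᵇ ℝ :=
  have exp_le : ∃ φ : X →ᵇ ℝ, ∀ x, Real.exp (φ x) ≤ u x := hu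
  have pos : ∀ x, 0 < u x := fun x => (Real.exp_pos _).trans_le (exp_le.choose_spec x)
  .ofNormedAddCommGroup (fun x => Real.log (u x)) (u.continuous.log fun x => (pos x).ne')
    (max ‖exp_le.choose‖ |Real.log ‖u‖|) fun x => by
      have lower := (Real.le_log_iff_exp_le (pos x)).2 (exp_le.choose_spec x)
      have upper := Real.log_le_log (pos x) (u.apply_le_norm x)
      exact (abs_le_max_abs_abs lower upper).trans
        (max_le_max_right _ (exp_le.choose.norm_coe_le_norm x))

theorem expBCF_logBCF (u : X →ᵇ ℝ) (hu : ∃ φ, expBCF φ ≤ u) : expBCF (logBCF u hu) = u := by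
  obtain ⟨φ, hφ⟩ := id hu
  ext x
  exact Real.exp_log ((Real.exp_pos _).trans_le (hφ x))

/-- The smooth maximum `log (e^φ + e^ψ)`. -/
def logAddExp (φ ψ : X →ᵇ ℝ) : X →ᵇ ℝ :=
  logBCF (expBCF φ + expBCF ψ) ⟨φ, le_add_of_nonneg_right (expBCF_nonneg ψ)⟩

theorem expBCF_logAddExp (φ ψ : X →ᵇ ℝ) : expBCF (logAddExp φ ψ) = expBCF φ + expBCF ψ :=
  expBCF_logBCF _ _

theorem le_logAddExp_left (φ ψ : X →ᵇ ℝ) : φ ≤ logAddExp φ ψ := by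
  rw [← expBCF_le_expBCF, expBCF_logAddExp]
  exact le_add_of_nonneg_right (expBCF_nonneg ψ)

theorem le_logAddExp_right (φ ψ : X →ᵇ ℝ) : ψ ≤ logAddExp φ ψ := by
  rw [← expBCF_le_expBCF, expBCF_logAddExp]
  exact le_add_of_nonneg_left (expBCF_nonneg φ)

theorem logAddExp_apply_le_add {φ ψ : X →ᵇ ℝ} {x y : X} {t : ℝ} (hφ : φ x ≤ φ y + t)
    (hψ : ψ x ≤ ψ y + t) : logAddExp φ ψ x ≤ logAddExp φ ψ y + t := by
  have exp_apply (z : X) : Real.exp (logAddExp φ ψ z) = Real.exp (φ z) + Real.exp (ψ z) :=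
    DFunLike.congr_fun (expBCF_logAddExp φ ψ) z
  rw [← Real.exp_le_exp, Real.exp_add, exp_apply, exp_apply, add_mul, ← Real.exp_add,
    ← Real.exp_add]
  exact add_le_add (Real.exp_le_exp.2 hφ) (Real.exp_le_exp.2 hψ)

end LogExp

section TransferOperator

variable {X : Type*} [TopologicalSpace X]

/-- A normalized transfer operator of `T`: a positive unital operator `A` on bounded continuous
functions with `A (φ ∘ T * ψ) = φ * A ψ`. The Ruelle operator of a potential `g` is then
`φ ↦ A (e^g * φ)`. -/
structure TransferOperator (T : C(X, X)) extends (X →ᵇ ℝ) →ₗ[ℝ] (X →ᵇ ℝ) where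
  monotone' : Monotone toFun
  map_one' : toFun 1 = 1
  map_compContinuous_mul' : ∀ φ ψ, toFun (φ.compContinuous T * ψ) = φ * toFun ψ

namespace TransferOperator

variable {T : C(X, X)}

instance : CoeFun (TransferOperator T) fun _ => (X →ᵇ ℝ) → (X →ᵇ ℝ) := ⟨fun A => A.toFun⟩

variable (A : TransferOperator T)

theorem monotone : Monotone A := A.monotone'

theorem map_add (φ ψ : X →ᵇ ℝ) : A (φ + ψ) = A φ + A ψ := A.toLinearMap.map_add φ ψ

theorem map_one : A 1 = 1 := A.map_one'

theorem map_compContinuous_mul (φ ψ : X →ᵇ ℝ) : A (φ.compContinuous T * ψ) = φ * A ψ :=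
  A.map_compContinuous_mul' φ ψ

theorem map_expBCF_compContinuous_add (φ ψ : X →ᵇ ℝ) :
    A (expBCF (φ.compContinuous T + ψ)) = expBCF φ * A (expBCF ψ) := by
  rw [expBCF_add, ← A.map_compContinuous_mul]; rfl

theorem map_expBCF_smul_one (c : ℝ) : A (expBCF (c • 1)) = expBCF (c • 1) := by
  have h : A (expBCF (c • 1 + 0)) = expBCF (c • 1) * A (expBCF 0) :=
    A.map_expBCF_compContinuous_add (c • 1) 0
  rwa [add_zero, expBCF_zero, A.map_one, mul_one] at h

theorem exists_expBCF_le (φ : X →ᵇ ℝ) : ∃ ψ, expBCF ψ ≤ A (expBCF φ) := by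
  refine ⟨(-‖φ‖) • 1, ?_⟩
  rw [← A.map_expBCF_smul_one]
  exact A.monotone (expBCF_le_expBCF.2 fun x => by simpa using φ.neg_norm_le_apply x)

/-- The nonlinear operator `φ ↦ log (A e^φ)`. -/
def logTransfer (φ : X →ᵇ ℝ) : X →ᵇ ℝ := logBCF (A (expBCF φ)) (A.exists_expBCF_le φ)

theorem expBCF_logTransfer (φ : X →ᵇ ℝ) : expBCF (A.logTransfer φ) = A (expBCF φ) :=
  expBCF_logBCF _ _

theorem logTransfer_mono : Monotone A.logTransfer := fun φ ψ h => by
  rw [← expBCF_le_expBCF, expBCF_logTransfer, expBCF_logTransfer]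
  exact A.monotone (expBCF_le_expBCF.2 h)

theorem logTransfer_smul_one (c : ℝ) : A.logTransfer (c • 1) = c • 1 :=
  expBCF_injective <| by rw [expBCF_logTransfer, map_expBCF_smul_one]

theorem logTransfer_compContinuous_add (φ ψ : X →ᵇ ℝ) :
    A.logTransfer (φ.compContinuous T + ψ) = φ + A.logTransfer ψ :=
  expBCF_injective <| by
    rw [expBCF_logTransfer, map_expBCF_compContinuous_add, expBCF_add, expBCF_logTransfer]

theorem logTransfer_add_smul_one (φ : X →ᵇ ℝ) (c : ℝ) :
    A.logTransfer (φ + c • 1) = A.logTransfer φ + c • 1 := by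
  rw [add_comm, add_comm _ (c • 1)]
  exact A.logTransfer_compContinuous_add (c • 1) φ

/-- The logarithm of the `n`-th partition function `L_g^n 1`, where `L_g φ = A (e^g * φ)`. -/
def logPartition (g : X →ᵇ ℝ) (n : ℕ) : X →ᵇ ℝ := (fun φ => A.logTransfer (g + φ))^[n] 0

theorem logPartition_zero (g : X →ᵇ ℝ) : A.logPartition g 0 = 0 := rfl

theorem logPartition_succ (g : X →ᵇ ℝ) (n : ℕ) :
    A.logPartition g (n + 1) = A.logTransfer (g + A.logPartition g n) :=
  Function.iterate_succ_apply' _ _ _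

theorem logPartition_add_le {g : X →ᵇ ℝ} {n : ℕ} {c : ℝ} (h : A.logPartition g n ≤ c • 1) (m : ℕ) :
    A.logPartition g (m + n) ≤ A.logPartition g m + c • 1 := by
  induction m with
  | zero => simpa [logPartition_zero] using h
  | succ m ih =>
    rw [Nat.add_right_comm, logPartition_succ, logPartition_succ, ← logTransfer_add_smul_one]
    exact A.logTransfer_mono (by simpa [add_assoc] using add_le_add_right ih g)

theorem neg_mul_norm_le_logPartition (g : X →ᵇ ℝ) (n : ℕ) :
    (-(n * ‖g‖)) • 1 ≤ A.logPartition g n := by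
  induction n with
  | zero => simp [logPartition_zero]
  | succ n ih =>
    have lower : (-((n + 1 : ℕ) * ‖g‖)) • 1 ≤ g + A.logPartition g n := fun x => by
      have hn : -(n * ‖g‖) ≤ A.logPartition g n x := by simpa using ih x
      have hg := g.neg_norm_le_apply x
      have hx : -((n + 1) * ‖g‖) ≤ g x + A.logPartition g n x := by linarith
      simpa using hx
    rw [logPartition_succ, ← A.logTransfer_smul_one]
    exact A.logTransfer_mono lower

/-- Up to the additive error `D`, the sequence `logPartition g n x` is subadditive. -/
theorem exists_tendsto_logPartition_div {g : X →ᵇ ℝ} {D : ℝ}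
    (hD : ∀ n x y, A.logPartition g n x ≤ A.logPartition g n y + D) (x : X) :
    ∃ ℓ, Tendsto (fun n : ℕ => A.logPartition g n x / n) atTop (𝓝 ℓ) := by
  have subadd : Subadditive fun n => A.logPartition g n x + D := fun m n => by
    have hn : A.logPartition g n ≤ (A.logPartition g n x + D) • 1 := fun y => by
      simpa using hD n y x
    have hmn : A.logPartition g (m + n) x ≤ A.logPartition g m x + (A.logPartition g n x + D) := by
      simpa using A.logPartition_add_le hn m x
    linarith
  have hD_nonneg : 0 ≤ D := by simpa using hD 0 x x
  have bdd : BddBelow (Set.range fun n : ℕ => (A.logPartition g n x + D) / n) := by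
    refine ⟨-‖g‖, ?_⟩
    rintro _ ⟨n, rfl⟩
    rcases n.eq_zero_or_pos with rfl | hn
    · simp
    · have hv : -(n * ‖g‖) ≤ A.logPartition g n x := by
        simpa using A.neg_mul_norm_le_logPartition g n x
      rw [le_div_iff₀ (by exact_mod_cast hn)]
      linarith
  refine ⟨subadd.lim, ?_⟩
  simpa [add_div] using (subadd.tendsto_lim bdd).sub (tendsto_const_div_atTop_nhds_zero_nat D)

theorem exists_logPartition_succ_le {g : X →ᵇ ℝ} {D ℓ c : ℝ}
    (hD : ∀ n x y, A.logPartition g n x ≤ A.logPartition g n y + D) {x : X}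
    (hℓ : Tendsto (fun n : ℕ => A.logPartition g n x / n) atTop (𝓝 ℓ)) (hc : ℓ < c) :
    ∃ m : ℕ, A.logPartition g (m + 1) ≤ ((m + 1) * c) • 1 := by
  have lim : Tendsto (fun n : ℕ => A.logPartition g n x / n + D / n) atTop (𝓝 ℓ) := by
    simpa using hℓ.add (tendsto_const_div_atTop_nhds_zero_nat D)
  obtain ⟨m, hm⟩ := ((tendsto_add_atTop_iff_nat 1).2 lim).eventually_lt_const hc |>.exists
  refine ⟨m, fun y => ?_⟩
  rw [← add_div, div_lt_iff₀ (by positivity), Nat.cast_add_one, mul_comm] at hm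
  simpa using (hD (m + 1) y x).trans hm.le

/-- The minimum of `log (e^{-kc} L_g^k 1)` over `k ≤ m`, a candidate for the logarithm of a function
`h` with `L_g h ≤ e^c h`. -/
def subEigenfunction (g : X →ᵇ ℝ) (c : ℝ) (m : ℕ) : X →ᵇ ℝ :=
  (Finset.range (m + 1)).inf' Finset.nonempty_range_add_one fun k =>
    A.logPartition g k - (k * c) • 1

/-- Each term of the minimum is mapped to its successor; the hypothesis closes the cycle from the
last term to the first. -/
theorem logTransfer_add_subEigenfunction_le {g : X →ᵇ ℝ} {c : ℝ} {m : ℕ}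
    (hm : A.logPartition g (m + 1) ≤ ((m + 1) * c) • 1) :
    A.logTransfer (g + A.subEigenfunction g c m) ≤ A.subEigenfunction g c m + c • 1 := by
  set h := A.subEigenfunction g c m
  have step (k : ℕ) (hk : k < m + 1) (x : X) :
      A.logTransfer (g + h) x + k * c ≤ A.logPartition g (k + 1) x := by
    have hhk : h ≤ A.logPartition g k - (k * c) • 1 := Finset.inf'_le _ (Finset.mem_range.2 hk)
    have shifted : g + h + (k * c) • 1 ≤ g + A.logPartition g k := by
      rw [add_assoc]
      exact add_le_add_right (le_sub_iff_add_le.1 hhk) g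
    simpa [logTransfer_add_smul_one, ← logPartition_succ] using A.logTransfer_mono shifted x
  rw [← sub_le_iff_le_add]
  refine Finset.le_inf' _ _ fun k hk x => ?_
  suffices A.logTransfer (g + h) x ≤ A.logPartition g k x - k * c + c by simpa [sub_le_iff_le_add]
  cases k with
  | zero =>
    have hmx : A.logPartition g (m + 1) x ≤ (m + 1) * c := by simpa using hm x
    simp only [logPartition_zero, BoundedContinuousFunction.coe_zero, Pi.zero_apply, Nat.cast_zero]
    linarith [step m m.lt_succ_self x]
  | succ k =>
    push_cast
    linarith [step k ((Nat.lt_succ_self k).trans (Finset.mem_range.1 hk)) x]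

/-- The potentials `g` with `L_g 1 ≤ 1`, where `L_g φ = A (e^g * φ)`. -/
def IsSubnormalized (g : X →ᵇ ℝ) : Prop := A.logTransfer g ≤ 0

theorem isSubnormalized_zero : A.IsSubnormalized 0 := by
  simpa [IsSubnormalized] using (A.logTransfer_smul_one 0).le

variable {A} in
theorem IsSubnormalized.logPartition_le_zero {g : X →ᵇ ℝ} (hg : A.IsSubnormalized g) (n : ℕ) :
    A.logPartition g n ≤ 0 := by
  induction n with
  | zero => exact le_rfl
  | succ n ih =>
    rw [logPartition_succ]
    exact (A.logTransfer_mono (add_le_of_nonpos_right ih)).trans hg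

theorem isSubnormalized_add_sub {g h : X →ᵇ ℝ} {c : ℝ} (hh : A.logTransfer (g + h) ≤ h + c • 1) :
    A.IsSubnormalized (g + h - h.compContinuous T - c • 1) := by
  have split : g + h - h.compContinuous T - c • 1
      = (-h - c • 1).compContinuous T + (g + h) := by
    change _ = -h.compContinuous T - c • 1 + (g + h)
    abel
  rw [IsSubnormalized, split, logTransfer_compContinuous_add]
  exact (add_le_add_right hh _).trans_eq (by abel)

end TransferOperator

/-- The Birkhoff sum `∑_{k < n} g ∘ T^k`. -/
def birkhoffBCF (T : C(X, X)) (g : X →ᵇ ℝ) : ℕ → X →ᵇ ℝ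
  | 0 => 0
  | n + 1 => (birkhoffBCF T g n).compContinuous T + g

/-- The potential `log (W_{n+1} / W_n ∘ T)` with `W_n = e^{S_n g₁} + e^{S_n g₂}`, where `S_n` is the
Birkhoff sum. It is subnormalized when `g₁` and `g₂` are, while under any invariant mean its first
`n` values sum to the mean of `log (W_n / 2)`, which is at least that of `S_n g₁` or `S_n g₂` up to
`log 2`. -/
def interpolant (T : C(X, X)) (g₁ g₂ : X →ᵇ ℝ) (n : ℕ) : X →ᵇ ℝ :=
  logAddExp (birkhoffBCF T g₁ (n + 1)) (birkhoffBCF T g₂ (n + 1)) -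
    (logAddExp (birkhoffBCF T g₁ n) (birkhoffBCF T g₂ n)).compContinuous T

theorem TransferOperator.IsSubnormalized.interpolant {T : C(X, X)} {A : TransferOperator T}
    {g₁ g₂ : X →ᵇ ℝ} (h₁ : A.IsSubnormalized g₁) (h₂ : A.IsSubnormalized g₂) (n : ℕ) :
    A.IsSubnormalized (interpolant T g₁ g₂ n) := by
  have map_birkhoff_le {g : X →ᵇ ℝ} (hg : A.IsSubnormalized g) :
      A (expBCF (birkhoffBCF T g (n + 1))) ≤ expBCF (birkhoffBCF T g n) := by
    rw [← expBCF_logTransfer, expBCF_le_expBCF, birkhoffBCF, logTransfer_compContinuous_add]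
    exact add_le_of_nonpos_right hg
  set W := logAddExp (birkhoffBCF T g₁ n) (birkhoffBCF T g₂ n) with hW
  set W' := logAddExp (birkhoffBCF T g₁ (n + 1)) (birkhoffBCF T g₂ (n + 1)) with hW'
  have logTransfer_le : A.logTransfer W' ≤ W := by
    rw [← expBCF_le_expBCF, expBCF_logTransfer, hW, hW', expBCF_logAddExp, expBCF_logAddExp,
      A.map_add]
    exact add_le_add (map_birkhoff_le h₁) (map_birkhoff_le h₂)
  calc A.logTransfer (W' - W.compContinuous T) = A.logTransfer ((-W).compContinuous T + W') := by
        change _ = A.logTransfer (-W.compContinuous T + W')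
        rw [neg_add_eq_sub]
    _ = -W + A.logTransfer W' := A.logTransfer_compContinuous_add _ _
    _ ≤ 0 := by rwa [neg_add_le_iff_le_add, add_zero]

end TransferOperator

instance weakDual_locallyConvexSpace {V : Type*} [AddCommGroup V] [Module ℝ V]
    [TopologicalSpace V] : LocallyConvexSpace ℝ (WeakDual ℝ V) :=
  inferInstanceAs (LocallyConvexSpace ℝ (WeakBilin (topDualPairing ℝ V)))

section InvariantMeans

variable {X : Type*} [TopologicalSpace X]

/-- The finitely additive `T`-invariant probability measures, as functionals on bounded continuous
functions. -/
def invariantMeans (T : C(X, X)) : Set (WeakDual ℝ (X →ᵇ ℝ)) :=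
  {μ | (μ 1 = 1 ∧ ∀ g, 0 ≤ g → 0 ≤ μ g) ∧ ∀ g, μ (g.compContinuous T) = μ g}

variable {T : C(X, X)}

theorem apply_mono_of_mem_invariantMeans {μ : WeakDual ℝ (X →ᵇ ℝ)} (hμ : μ ∈ invariantMeans T)
    {φ ψ : X →ᵇ ℝ} (h : φ ≤ ψ) : μ φ ≤ μ ψ := by
  simpa using hμ.1.2 (ψ - φ) (sub_nonneg.2 h)

theorem apply_birkhoffBCF {μ : WeakDual ℝ (X →ᵇ ℝ)} (hμ : μ ∈ invariantMeans T) (g : X →ᵇ ℝ)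
    (n : ℕ) : μ (birkhoffBCF T g n) = n * μ g := by
  induction n with
  | zero => simp [birkhoffBCF]
  | succ n ih => rw [birkhoffBCF, map_add, hμ.2, ih]; push_cast; ring

theorem apply_add_sub_compContinuous {μ : WeakDual ℝ (X →ᵇ ℝ)} (hμ : μ ∈ invariantMeans T)
    (g h : X →ᵇ ℝ) (c : ℝ) : μ (g + h - h.compContinuous T - c • 1) = μ g - c := by
  rw [map_sub, map_sub, map_add, map_smul, hμ.2, hμ.1.1, smul_eq_mul]; ring

theorem sum_apply_interpolant {μ : WeakDual ℝ (X →ᵇ ℝ)} (hμ : μ ∈ invariantMeans T)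
    (g₁ g₂ : X →ᵇ ℝ) (n : ℕ) :
    ∑ k ∈ Finset.range n, μ (interpolant T g₁ g₂ k) =
      μ (logAddExp (birkhoffBCF T g₁ n) (birkhoffBCF T g₂ n)) - μ (logAddExp 0 0) := by
  simp only [interpolant, map_sub, hμ.2]
  exact Finset.sum_range_sub (fun k => μ (logAddExp (birkhoffBCF T g₁ k) (birkhoffBCF T g₂ k))) n

theorem nsmul_sub_le_sum_apply_interpolant {μ ν : WeakDual ℝ (X →ᵇ ℝ)} (hμ : μ ∈ invariantMeans T)
    (hν : ν ∈ invariantMeans T) {a b : ℝ} (ha : 0 ≤ a) (hb : 0 ≤ b) (g₁ g₂ : X →ᵇ ℝ) (n : ℕ) :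
    n * (a * μ g₁ + b * ν g₂) - (a • μ + b • ν) (logAddExp 0 0) ≤
      ∑ k ∈ Finset.range n, (a • μ + b • ν) (interpolant T g₁ g₂ k) := by
  have h₁ := apply_mono_of_mem_invariantMeans hμ
    (le_logAddExp_left (birkhoffBCF T g₁ n) (birkhoffBCF T g₂ n))
  have h₂ := apply_mono_of_mem_invariantMeans hν
    (le_logAddExp_right (birkhoffBCF T g₁ n) (birkhoffBCF T g₂ n))
  rw [apply_birkhoffBCF hμ] at h₁
  rw [apply_birkhoffBCF hν] at h₂
  have apply_combo (φ : X →ᵇ ℝ) : (a • μ + b • ν) φ = a * μ φ + b * ν φ := rfl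
  simp only [apply_combo, Finset.sum_add_distrib, ← Finset.mul_sum, sum_apply_interpolant hμ,
    sum_apply_interpolant hν]
  linarith [mul_le_mul_of_nonneg_left h₁ ha, mul_le_mul_of_nonneg_left h₂ hb]

theorem exists_sub_le_apply_interpolant {μ ν : WeakDual ℝ (X →ᵇ ℝ)} (hμ : μ ∈ invariantMeans T)
    (hν : ν ∈ invariantMeans T) {a b : ℝ} (ha : 0 ≤ a) (hb : 0 ≤ b) (g₁ g₂ : X →ᵇ ℝ) {ε : ℝ}
    (hε : 0 < ε) :
    ∃ n, a * μ g₁ + b * ν g₂ - ε ≤ (a • μ + b • ν) (interpolant T g₁ g₂ n) := by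
  by_contra! small
  obtain ⟨n, hn⟩ := exists_nat_gt ((a • μ + b • ν) (logAddExp 0 0) / ε)
  rw [div_lt_iff₀ hε] at hn
  have upper : ∑ k ∈ Finset.range n, (a • μ + b • ν) (interpolant T g₁ g₂ k) ≤
      n * (a * μ g₁ + b * ν g₂ - ε) := by
    simpa using Finset.sum_le_card_nsmul (Finset.range n) _ _ fun k _ => (small k).le
  linarith [nsmul_sub_le_sum_apply_interpolant hμ hν ha hb g₁ g₂ n]

theorem convex_invariantMeans (T : C(X, X)) : Convex ℝ (invariantMeans T) := by
  intro μ hμ ν hν a b ha hb hab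
  have apply_combo (φ : X →ᵇ ℝ) : (a • μ + b • ν) φ = a * μ φ + b * ν φ := rfl
  refine ⟨⟨?_, fun g hg => ?_⟩, fun g => ?_⟩
  · rw [apply_combo, hμ.1.1, hν.1.1, mul_one, mul_one, hab]
  · rw [apply_combo]
    exact add_nonneg (mul_nonneg ha (hμ.1.2 g hg)) (mul_nonneg hb (hν.1.2 g hg))
  · rw [apply_combo, apply_combo, hμ.2, hν.2]

theorem isCompact_invariantMeans (T : C(X, X)) : IsCompact (invariantMeans T) := by
  refine (WeakDual.isCompact_closedBall (0 : StrongDual ℝ (X →ᵇ ℝ)) 1).of_isClosed_subset ?_ ?_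
  · simp only [invariantMeans, Set.ofPred_and, Set.ofPred_forall]
    refine (IsClosed.inter ?_ ?_).inter ?_
    · exact isClosed_eq (WeakDual.eval_continuous _) continuous_const
    · exact isClosed_iInter fun g => isClosed_iInter fun _ =>
        isClosed_le continuous_const (WeakDual.eval_continuous _)
    · exact isClosed_iInter fun g =>
        isClosed_eq (WeakDual.eval_continuous _) (WeakDual.eval_continuous _)
  · intro μ hμ
    have apply_le (g : X →ᵇ ℝ) : μ g ≤ ‖g‖ := by
      have hg : g ≤ ‖g‖ • 1 := fun x => by simpa using g.apply_le_norm x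
      simpa [hμ.1.1] using apply_mono_of_mem_invariantMeans hμ hg
    rw [Set.mem_preimage, mem_closedBall_zero_iff]
    refine ContinuousLinearMap.opNorm_le_bound _ zero_le_one fun g => ?_
    rw [one_mul, Real.norm_eq_abs]
    exact abs_le'.2 ⟨apply_le g, by simpa using apply_le (-g)⟩

theorem invariantMeans_nonempty {x : X} (hx : T x = x) : (invariantMeans T).Nonempty :=
  ⟨(BoundedContinuousFunction.evalCLM ℝ x : StrongDual ℝ (X →ᵇ ℝ)),
    ⟨rfl, fun _ hg => hg x⟩, fun g => congrArg g hx⟩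

end InvariantMeans

section SequenceMetric

variable {E : Type*} [MetricSpace E] (x y : ℕ → E)

theorem summable_dX : Summable fun n : ℕ => ((1 : ℝ) / 2) ^ (n + 1) * min (dist (x n) (y n)) 1 :=
  .of_nonneg_of_le (fun n => by positivity)
    (fun n => mul_le_of_le_one_right (by positivity) (min_le_right _ _))
    ((summable_nat_add_iff 1).2 summable_geometric_two)

theorem dX_nonneg : 0 ≤ dX x y := tsum_nonneg fun n => by positivity

theorem dX_comm : dX x y = dX y x := by simp only [dX, dist_comm]

theorem dX_eq_add_dX_shift :
    dX x y = min (dist (x 0) (y 0)) 1 / 2 + dX (shift x) (shift y) / 2 := by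
  unfold dX
  rw [(summable_dX x y).tsum_eq_zero_add, ← tsum_div_const]
  congr 1
  · ring
  · exact tsum_congr fun n => by rw [shift, shift, pow_succ]; ring

theorem dX_le_one : dX x y ≤ 1 := by
  have geometric : HasSum (fun n : ℕ => ((1 : ℝ) / 2) ^ (n + 1)) 1 := by
    convert hasSum_geometric_two' (1 : ℝ) using 2 with n
    rw [pow_succ, one_div_pow]
    ring
  rw [← geometric.tsum_eq]
  exact (summable_dX x y).tsum_le_tsum
    (fun n => mul_le_of_le_one_right (by positivity) (min_le_right _ _)) geometric.summable

theorem dX_cons (a : E) : dX (cons a x) (cons a y) = dX x y / 2 := by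
  rw [dX_eq_add_dX_shift]
  change min (dist a a) 1 / 2 + dX x y / 2 = _
  simp

theorem dX_shift_le : dX (shift x) (shift y) ≤ 2 * dX x y := by
  have : 0 ≤ min (dist (x 0) (y 0)) 1 := by positivity
  linarith [dX_eq_add_dX_shift x y]

end SequenceMetric

section Holder

variable {E : Type*} [MetricSpace E] {α C D : ℝ} {φ ψ : (ℕ → E) → ℝ}

theorem holderConst_iff_le_add : HolderConst α C φ ↔ ∀ x y, φ x ≤ φ y + C * dX x y ^ α := by
  refine ⟨fun h x y => ?_, fun h x y => ?_⟩
  · linarith [(abs_le.1 (h x y)).2]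
  · rw [abs_sub_le_iff]
    exact ⟨by linarith [h x y], by linarith [dX_comm x y ▸ h y x]⟩

namespace HolderConst

theorem mono (h : HolderConst α C φ) (hCD : C ≤ D) : HolderConst α D φ := fun x y =>
  (h x y).trans (mul_le_mul_of_nonneg_right hCD (Real.rpow_nonneg (dX_nonneg x y) α))

theorem zero (hC : 0 ≤ C) : HolderConst α C (0 : (ℕ → E) → ℝ) := fun x y => by
  simpa using mul_nonneg hC (Real.rpow_nonneg (dX_nonneg x y) α)

theorem add (hφ : HolderConst α C φ) (hψ : HolderConst α D ψ) : HolderConst α (C + D) (φ + ψ) := by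
  rw [holderConst_iff_le_add] at *
  intro x y
  simp only [Pi.add_apply]
  linarith [hφ x y, hψ x y]

theorem const_smul (c : ℝ) (h : HolderConst α C φ) :
    HolderConst α (|c| * C) (c • φ) := fun x y => by
  simpa [← mul_sub, abs_mul, mul_assoc] using mul_le_mul_of_nonneg_left (h x y) (abs_nonneg c)

theorem comp_shift (hα : 0 ≤ α) (hC : 0 ≤ C) (h : HolderConst α C φ) :
    HolderConst α (C * 2 ^ α) (φ ∘ shift) := fun x y =>
  calc |φ (shift x) - φ (shift y)| ≤ C * dX (shift x) (shift y) ^ α := h _ _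
    _ ≤ C * (2 * dX x y) ^ α := by
        gcongr
        exacts [dX_nonneg _ _, dX_shift_le x y]
    _ = C * 2 ^ α * dX x y ^ α := by
        rw [Real.mul_rpow zero_le_two (dX_nonneg x y), mul_assoc]

theorem le_add (h : HolderConst α C φ) (hα : 0 ≤ α) (hC : 0 ≤ C) (x y : ℕ → E) :
    φ x ≤ φ y + C := by
  have : C * dX x y ^ α ≤ C :=
    mul_le_of_le_one_right hC (Real.rpow_le_one (dX_nonneg x y) (dX_le_one x y) hα)
  linarith [holderConst_iff_le_add.1 h x y]

end HolderConst

variable (E) in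
/-- The space `Hol(α)` of bounded continuous `α`-Hölder functions on the sequence space. -/
def holderBCF (α : ℝ) : Submodule ℝ ((ℕ → E) →ᵇ ℝ) where
  carrier := {g | ∃ C, HolderConst α C g}
  add_mem' := fun ⟨_, hg⟩ ⟨_, hh⟩ => ⟨_, hg.add hh⟩
  zero_mem' := ⟨0, .zero le_rfl⟩
  smul_mem' := fun c _ ⟨_, hg⟩ => ⟨_, hg.const_smul c⟩

theorem mem_holderBCF_iff_le_add {g : (ℕ → E) →ᵇ ℝ} :
    g ∈ holderBCF E α ↔ ∃ C, ∀ x y, g x ≤ g y + C * dX x y ^ α :=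
  exists_congr fun _ => holderConst_iff_le_add

theorem exists_nonneg_holderConst {g : (ℕ → E) →ᵇ ℝ} (hg : g ∈ holderBCF E α) :
    ∃ C, 0 ≤ C ∧ HolderConst α C g := by
  obtain ⟨C, hC⟩ := hg
  exact ⟨|C|, abs_nonneg C, hC.mono (le_abs_self C)⟩

theorem smul_one_mem_holderBCF (c : ℝ) : c • 1 ∈ holderBCF E α :=
  (holderBCF E α).smul_mem c ⟨0, fun _ _ => by simp⟩

theorem compContinuous_shiftCM_mem_holderBCF (hα : 0 ≤ α) {g : (ℕ → E) →ᵇ ℝ}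
    (hg : g ∈ holderBCF E α) : g.compContinuous shiftCM ∈ holderBCF E α := by
  obtain ⟨C, hC, hg⟩ := exists_nonneg_holderConst hg
  exact ⟨_, hg.comp_shift hα hC⟩

theorem mem_holderBCF_of_common_modulus {g h k : (ℕ → E) →ᵇ ℝ} (hg : g ∈ holderBCF E α)
    (hh : h ∈ holderBCF E α)
    (hk : ∀ x y t, g x ≤ g y + t → h x ≤ h y + t → k x ≤ k y + t) : k ∈ holderBCF E α := by
  obtain ⟨C, hg⟩ := hg
  obtain ⟨D, hh⟩ := hh
  exact mem_holderBCF_iff_le_add.2 ⟨max C D, fun x y => hk x y _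
    (holderConst_iff_le_add.1 (hg.mono (le_max_left C D)) x y)
    (holderConst_iff_le_add.1 (hh.mono (le_max_right C D)) x y)⟩

theorem inf_mem_holderBCF {g h : (ℕ → E) →ᵇ ℝ} (hg : g ∈ holderBCF E α) (hh : h ∈ holderBCF E α) :
    g ⊓ h ∈ holderBCF E α :=
  mem_holderBCF_of_common_modulus hg hh fun _ y t hgt hht =>
    (min_le_min hgt hht).trans_eq (min_add_add_right (g y) (h y) t)

theorem logAddExp_mem_holderBCF {g h : (ℕ → E) →ᵇ ℝ} (hg : g ∈ holderBCF E α)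
    (hh : h ∈ holderBCF E α) : logAddExp g h ∈ holderBCF E α :=
  mem_holderBCF_of_common_modulus hg hh fun _ _ _ => logAddExp_apply_le_add

theorem birkhoffBCF_mem_holderBCF (hα : 0 ≤ α) {g : (ℕ → E) →ᵇ ℝ} (hg : g ∈ holderBCF E α)
    (n : ℕ) : birkhoffBCF shiftCM g n ∈ holderBCF E α := by
  induction n with
  | zero => exact zero_mem _
  | succ n ih => exact add_mem (compContinuous_shiftCM_mem_holderBCF hα ih) hg

theorem interpolant_mem_holderBCF (hα : 0 ≤ α) {g h : (ℕ → E) →ᵇ ℝ} (hg : g ∈ holderBCF E α)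
    (hh : h ∈ holderBCF E α) (n : ℕ) : interpolant shiftCM g h n ∈ holderBCF E α := by
  have smoothMax_mem (k : ℕ) :
      logAddExp (birkhoffBCF shiftCM g k) (birkhoffBCF shiftCM h k) ∈ holderBCF E α :=
    logAddExp_mem_holderBCF (birkhoffBCF_mem_holderBCF hα hg k) (birkhoffBCF_mem_holderBCF hα hh k)
  exact sub_mem (smoothMax_mem _) (compContinuous_shiftCM_mem_holderBCF hα (smoothMax_mem n))

end Holder

section RuelleOperator

variable {E : Type*} [MetricSpace E]

theorem continuous_cons : Continuous fun q : E × (ℕ → E) => cons q.1 q.2 :=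
  continuous_pi fun n => match n with
    | 0 => continuous_fst
    | n + 1 => (continuous_apply n).comp continuous_snd

variable [MeasurableSpace E] [OpensMeasurableSpace E] (p : Measure E) [IsProbabilityMeasure p]

theorem integrable_comp_cons (φ : (ℕ → E) →ᵇ ℝ) (x : ℕ → E) :
    Integrable (fun a => φ (cons a x)) p := by
  have cont : Continuous fun a => φ (cons a x) :=
    φ.continuous.comp (continuous_cons.comp (Continuous.prodMk_left x))
  exact .of_bound cont.stronglyMeasurable.aestronglyMeasurable ‖φ‖ <|
    .of_forall fun a => φ.norm_coe_le_norm _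

theorem continuous_integral_comp_cons (φ : (ℕ → E) →ᵇ ℝ) :
    Continuous fun x => ∫ a, φ (cons a x) ∂p :=
  continuous_of_dominated (bound := fun _ => ‖φ‖)
    (fun x => (integrable_comp_cons p φ x).aestronglyMeasurable)
    (fun _ => .of_forall fun _ => φ.norm_coe_le_norm _) (integrable_const _)
    (.of_forall fun a => φ.continuous.comp (continuous_cons.comp (Continuous.prodMk_right a)))

/-- The Ruelle operator of the zero potential, `φ ↦ (x ↦ ∫ φ(ax) dp(a))`. -/
def shiftTransfer : TransferOperator (shiftCM (E := E)) where
  toFun φ := .ofNormedAddCommGroup (fun x => ∫ a, φ (cons a x) ∂p)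
    (continuous_integral_comp_cons p φ) ‖φ‖ fun x => by
      simpa using norm_integral_le_of_norm_le_const (μ := p) (f := fun a => φ (cons a x))
        (.of_forall fun a => φ.norm_coe_le_norm _)
  map_add' φ ψ := by
    ext x
    exact integral_add (integrable_comp_cons p φ x) (integrable_comp_cons p ψ x)
  map_smul' c φ := by ext x; exact integral_const_mul c _
  monotone' φ ψ h x :=
    integral_mono (integrable_comp_cons p φ x) (integrable_comp_cons p ψ x) fun a => h _
  map_one' := by ext x; simp
  map_compContinuous_mul' φ ψ := by
    ext x
    exact integral_const_mul (φ x) fun a => ψ (cons a x)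

theorem exp_logTransfer_apply (φ : (ℕ → E) →ᵇ ℝ) (x : ℕ → E) :
    Real.exp ((shiftTransfer p).logTransfer φ x) = ∫ a, Real.exp (φ (cons a x)) ∂p :=
  DFunLike.congr_fun ((shiftTransfer p).expBCF_logTransfer φ) x

theorem ruelle_iterate_one_eq_exp_logPartition (g : (ℕ → E) →ᵇ ℝ) (n : ℕ) :
    (ruelle p g)^[n] (fun _ => 1) = fun x => Real.exp ((shiftTransfer p).logPartition g n x) := by
  induction n with
  | zero => simp [TransferOperator.logPartition_zero]
  | succ n ih =>
    ext x
    rw [Function.iterate_succ_apply', ih, TransferOperator.logPartition_succ,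
      exp_logTransfer_apply]
    simp only [ruelle, BoundedContinuousFunction.coe_add, Pi.add_apply, Real.exp_add]

theorem logLambda_eq_limUnder [Nonempty E] (g : (ℕ → E) →ᵇ ℝ) :
    logLambda p g = limUnder atTop fun n : ℕ =>
      (shiftTransfer p).logPartition g n (Classical.arbitrary (ℕ → E)) / n := by
  simp only [logLambda, ruelle_iterate_one_eq_exp_logPartition, Real.log_exp, one_div,
    inv_mul_eq_div]

variable {α : ℝ}

/-- Prepending a symbol halves the distance. -/
theorem HolderConst.logTransfer {C : ℝ} {φ : (ℕ → E) →ᵇ ℝ} (h : HolderConst α C φ) :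
    HolderConst α (C / 2 ^ α) ((shiftTransfer p).logTransfer φ) := by
  rw [holderConst_iff_le_add] at h ⊢
  intro x y
  set t := C / 2 ^ α * dX x y ^ α with ht
  have cons_le (a : E) : φ (cons a x) ≤ φ (cons a y) + t := by
    convert h (cons a x) (cons a y) using 2
    rw [ht, dX_cons, Real.div_rpow (dX_nonneg x y) zero_le_two]
    ring
  rw [← Real.exp_le_exp, Real.exp_add, exp_logTransfer_apply, exp_logTransfer_apply,
    ← integral_mul_const]
  refine integral_mono (integrable_comp_cons p (expBCF φ) x)
    ((integrable_comp_cons p (expBCF φ) y).mul_const _) fun a => ?_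
  simpa only [← Real.exp_add] using Real.exp_le_exp.2 (cons_le a)

/-- The constant `C / (2 ^ α - 1)` is the fixed point of `D ↦ (C + D) / 2 ^ α`. -/
theorem HolderConst.logPartition (hα : 0 < α) {C : ℝ} (hC : 0 ≤ C) {g : (ℕ → E) →ᵇ ℝ}
    (hg : HolderConst α C g) (n : ℕ) :
    HolderConst α (C / (2 ^ α - 1)) ((shiftTransfer p).logPartition g n) := by
  have pos : (0 : ℝ) < 2 ^ α - 1 := sub_pos.2 (Real.one_lt_rpow one_lt_two hα)
  induction n with
  | zero => exact .zero (by positivity)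
  | succ n ih =>
    have fixed : (C + C / (2 ^ α - 1)) / 2 ^ α = C / (2 ^ α - 1) := by
      field_simp
      ring
    rw [TransferOperator.logPartition_succ, ← fixed]
    exact (hg.add ih).logTransfer p

theorem logPartition_mem_holderBCF (hα : 0 < α) {g : (ℕ → E) →ᵇ ℝ} (hg : g ∈ holderBCF E α)
    (n : ℕ) : (shiftTransfer p).logPartition g n ∈ holderBCF E α := by
  obtain ⟨C, hC, hg⟩ := exists_nonneg_holderConst hg
  exact ⟨_, hg.logPartition p hα hC n⟩

theorem exists_logPartition_le_add (hα : 0 < α) {g : (ℕ → E) →ᵇ ℝ} (hg : g ∈ holderBCF E α) :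
    ∃ D, ∀ n x y,
      (shiftTransfer p).logPartition g n x ≤ (shiftTransfer p).logPartition g n y + D := by
  obtain ⟨C, hC, hg⟩ := exists_nonneg_holderConst hg
  have pos : (0 : ℝ) < 2 ^ α - 1 := sub_pos.2 (Real.one_lt_rpow one_lt_two hα)
  exact ⟨_, fun n => (hg.logPartition p hα hC n).le_add hα.le (by positivity)⟩

theorem subEigenfunction_mem_holderBCF (hα : 0 < α) {g : (ℕ → E) →ᵇ ℝ} (hg : g ∈ holderBCF E α)
    (c : ℝ) (m : ℕ) : (shiftTransfer p).subEigenfunction g c m ∈ holderBCF E α :=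
  Finset.inf'_induction _ _ (fun _ h _ => inf_mem_holderBCF h) fun k _ =>
    sub_mem (logPartition_mem_holderBCF p hα hg k) (smul_one_mem_holderBCF _)

theorem tendsto_logPartition_div_logLambda [Nonempty E] (hα : 0 < α) {g : (ℕ → E) →ᵇ ℝ}
    (hg : g ∈ holderBCF E α) :
    Tendsto (fun n : ℕ => (shiftTransfer p).logPartition g n (Classical.arbitrary (ℕ → E)) / n)
      atTop (𝓝 (logLambda p g)) := by
  obtain ⟨D, hD⟩ := exists_logPartition_le_add p hα hg
  rw [logLambda_eq_limUnder]
  exact tendsto_nhds_limUnder ((shiftTransfer p).exists_tendsto_logPartition_div hD _)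

end RuelleOperator

section Entropy

variable {E : Type*} [MetricSpace E] [MeasurableSpace E] [Nonempty E] (p : Measure E) (α : ℝ)

theorem entropyV_eq_iInf (μ : WeakDual ℝ ((ℕ → E) →ᵇ ℝ)) :
    entropyV p α μ = ⨅ g ∈ holderBCF E α, ((-μ g + logLambda p g : ℝ) : EReal) := by
  refine le_antisymm (le_iInf₂ fun g hg => sInf_le ⟨g, hg, rfl⟩) (le_sInf ?_)
  rintro _ ⟨g, hg, rfl⟩
  exact iInf₂_le g hg

theorem entropyV_ne_top (μ : WeakDual ℝ ((ℕ → E) →ᵇ ℝ)) : entropyV p α μ ≠ ⊤ := by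
  rw [entropyV_eq_iInf]
  exact ne_top_of_le_ne_top (EReal.coe_ne_top _) (iInf₂_le 0 (zero_mem _))

theorem upperSemicontinuous_entropyV : UpperSemicontinuous (entropyV (E := E) p α) := by
  rw [funext (entropyV_eq_iInf p α)]
  exact upperSemicontinuous_biInf fun g _ => Continuous.upperSemicontinuous <|
    continuous_coe_real_ereal.comp ((WeakDual.eval_continuous g).neg.add continuous_const)

theorem upperSemicontinuous_entropyV_add_apply (f : (ℕ → E) →ᵇ ℝ) :
    UpperSemicontinuous fun μ : WeakDual ℝ ((ℕ → E) →ᵇ ℝ) =>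
      entropyV p α μ + ((μ f : ℝ) : EReal) :=
  (upperSemicontinuous_entropyV p α).add'
    (continuous_coe_real_ereal.comp (WeakDual.eval_continuous f)).upperSemicontinuous
    fun _ => EReal.continuousAt_add (.inr (EReal.coe_ne_bot _)) (.inr (EReal.coe_ne_top _))

end Entropy

section EntropyConvexity

variable {E : Type*} [MetricSpace E] [MeasurableSpace E] [OpensMeasurableSpace E] (p : Measure E)
  [IsProbabilityMeasure p] {α : ℝ}

/-- The Hölder potentials `g` with `L_g 1 ≤ 1`. -/
def normalizedHolder (α : ℝ) : Set ((ℕ → E) →ᵇ ℝ) :=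
  {g | g ∈ holderBCF E α ∧ (shiftTransfer p).IsSubnormalized g}

instance normalizedHolder_nonempty : Nonempty (normalizedHolder p α) :=
  ⟨0, zero_mem _, (shiftTransfer p).isSubnormalized_zero⟩

variable [Nonempty E]

theorem logLambda_nonpos_of_mem_normalizedHolder (hα : 0 < α) {g : (ℕ → E) →ᵇ ℝ}
    (hg : g ∈ normalizedHolder p α) : logLambda p g ≤ 0 :=
  le_of_tendsto' (tendsto_logPartition_div_logLambda p hα hg.1) fun n =>
    div_nonpos_of_nonpos_of_nonneg (hg.2.logPartition_le_zero n _) n.cast_nonneg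

theorem exists_mem_normalizedHolder_apply_eq (hα : 0 < α) {g : (ℕ → E) →ᵇ ℝ}
    (hg : g ∈ holderBCF E α) {c : ℝ} (hc : logLambda p g < c) {μ : WeakDual ℝ ((ℕ → E) →ᵇ ℝ)}
    (hμ : μ ∈ Maσ E) : ∃ g' ∈ normalizedHolder p α, μ g' = μ g - c := by
  obtain ⟨D, hD⟩ := exists_logPartition_le_add p hα hg
  obtain ⟨m, hm⟩ := (shiftTransfer p).exists_logPartition_succ_le hD
    (tendsto_logPartition_div_logLambda p hα hg) hc
  have hh := subEigenfunction_mem_holderBCF p hα hg c m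
  refine ⟨_, ⟨?_, (shiftTransfer p).isSubnormalized_add_sub
    ((shiftTransfer p).logTransfer_add_subEigenfunction_le hm)⟩,
    apply_add_sub_compContinuous hμ _ _ _⟩
  exact sub_mem (sub_mem (add_mem hg hh) (compContinuous_shiftCM_mem_holderBCF hα.le hh))
    (smul_one_mem_holderBCF c)

theorem entropyV_eq_iInf_normalizedHolder (hα : 0 < α) {μ : WeakDual ℝ ((ℕ → E) →ᵇ ℝ)}
    (hμ : μ ∈ Maσ E) :
    entropyV p α μ = ⨅ g : normalizedHolder p α, ((-μ g : ℝ) : EReal) := by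
  rw [entropyV_eq_iInf]
  refine le_antisymm (le_iInf fun ⟨g, hg⟩ => ?_) (le_iInf₂ fun g hg => ?_)
  · refine (iInf₂_le g hg.1).trans (EReal.coe_le_coe_iff.2 ?_)
    linarith [logLambda_nonpos_of_mem_normalizedHolder p hα hg]
  · refine EReal.le_of_forall_lt_iff_le.1 fun r hr => ?_
    obtain ⟨g', hg', hg'_apply⟩ := exists_mem_normalizedHolder_apply_eq p hα hg
      (c := r + μ g) (by linarith [EReal.coe_lt_coe_iff.1 hr]) hμ
    refine (iInf_le _ ⟨g', hg'⟩).trans (EReal.coe_le_coe_iff.2 ?_)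
    linarith

theorem erealConvexOn_entropyV (hα : 0 < α) : ERealConvexOn (Maσ E) (entropyV p α) := by
  intro μ hμ ν hν a b ha hb hab
  have hκ : a • μ + b • ν ∈ Maσ E := convex_invariantMeans shiftCM hμ hν ha.le hb.le hab
  rw [entropyV_eq_iInf_normalizedHolder p hα hμ, entropyV_eq_iInf_normalizedHolder p hα hν,
    entropyV_eq_iInf_normalizedHolder p hα hκ, coe_mul_iInf ha, coe_mul_iInf hb]
  simp only [← EReal.coe_mul]
  refine le_iInf_add_iInf_coe fun ⟨g₁, hg₁⟩ ⟨g₂, hg₂⟩ => ?_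
  refine EReal.le_of_forall_lt_iff_le.1 fun r hr => ?_
  obtain ⟨n, hn⟩ := exists_sub_le_apply_interpolant hμ hν ha.le hb.le g₁ g₂
    (sub_pos.2 (EReal.coe_lt_coe_iff.1 hr))
  refine (iInf_le _ ⟨interpolant shiftCM g₁ g₂ n, interpolant_mem_holderBCF hα.le hg₁.1 hg₂.1 n,
    hg₁.2.interpolant hg₂.2 n⟩).trans (EReal.coe_le_coe_iff.2 ?_)
  linarith

end EntropyConvexity

theorem statement15_general {E : Type*} [MetricSpace E] [MeasurableSpace E]
    [OpensMeasurableSpace E] [Nonempty E] (p : Measure E) [IsProbabilityMeasure p]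
    (α : ℝ) (hα0 : 0 < α) (f : (ℕ → E) →ᵇ ℝ) :
    ∃ μf : WeakDual ℝ ((ℕ → E) →ᵇ ℝ), μf ∈ Maσ E ∧
      μf ∈ Set.extremePoints ℝ (Maσ E) ∧
      entropyV p α μf + ((μf f : ℝ) : EReal) =
        ⨆ μ ∈ Maσ E, entropyV p α μ + ((μ f : ℝ) : EReal) := by
  have compact : IsCompact (Maσ E) := isCompact_invariantMeans shiftCM
  have nonempty : (Maσ E).Nonempty :=
    invariantMeans_nonempty (T := shiftCM) (x := fun _ => Classical.arbitrary E) rfl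
  have convex : ERealConvexOn (Maσ E) fun μ => entropyV p α μ + ((μ f : ℝ) : EReal) :=
    (erealConvexOn_entropyV p hα0).add_linearMap ((topDualPairing ℝ _).flip f)
  obtain ⟨μf, hμf_extreme, hμf_max⟩ := convex.exists_mem_extremePoints_isMaxOn
    (fun μ _ => EReal.add_ne_top (entropyV_ne_top p α μ) (EReal.coe_ne_top _))
    ((upperSemicontinuous_entropyV_add_apply p α f).upperSemicontinuousOn _) compact nonempty
  exact ⟨μf, hμf_extreme.1, hμf_extreme,
    le_antisymm (le_iSup₂_of_le μf hμf_extreme.1 le_rfl) (iSup₂_le fun _ hμ => hμf_max hμ)⟩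

/-- Existence of equilibrium states: for any bounded continuous
potential `f` there is `μ_f ∈ M^a_σ(X)`, which may be chosen to be an extreme point
of `M^a_σ(X)`, realizing `sup_{μ ∈ M^a_σ(X)} [h^v(μ) + μ(f)]`. -/
theorem statement15 {E : Type*} [MetricSpace E] [CompleteSpace E]
    [TopologicalSpace.SeparableSpace E] [MeasurableSpace E] [BorelSpace E] [Nonempty E]
    (p : Measure E) [IsProbabilityMeasure p]
    (α : ℝ) (hα0 : 0 < α) (hα1 : α < 1)
    (f : (ℕ → E) →ᵇ ℝ) :
    ∃ μf : WeakDual ℝ ((ℕ → E) →ᵇ ℝ), μf ∈ Maσ E ∧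
      μf ∈ Set.extremePoints ℝ (Maσ E) ∧
      entropyV p α μf + ((μf f : ℝ) : EReal) =
        ⨆ μ ∈ Maσ E, entropyV p α μ + ((μ f : ℝ) : EReal) :=
  statement15_general p α hα0 f

end
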